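/- Let m ∈ ℝ with m < -1, and let a, b : ℝ^N × ℝ → ℂ be symbols of order m, i.e. for all multiindices β and integers α ≥ 0 and compact K ⊂ ℝ^N, |∂_x^β ∂_{ξ}^α a(x,ξ)| ≤ C ⟨ξ⟩^{m-α} on K × ℝ and similarly for b. Then the fiberwise convolution c(x,ξ) = ∫_ℝ a(x, ξ-η) b(x,η) dη is again a symbol of order m: for all β, α, K there is C' with |∂_x^β ∂_ξ^α c(x,ξ)| ≤ C' ⟨ξ⟩^{m-α} on K × ℝ. -/

import Mathlib

noncomputable section

/-- Directional derivative of a function on `ℝ^N` in the `i`-th coordinate direction. -/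
def dirDeriv {N : ℕ} (i : Fin N) (f : (Fin N → ℝ) → ℂ) : (Fin N → ℝ) → ℂ :=
  fun x => fderiv ℝ f x (Pi.single i 1)

/-- Iterated directional derivatives `∂_x^β` along a list of coordinate directions. -/
def dirDerivs {N : ℕ} (L : List (Fin N)) (f : (Fin N → ℝ) → ℂ) : (Fin N → ℝ) → ℂ :=
  L.foldr dirDeriv f

/-- `a : ℝ^N × ℝ → ℂ` is a symbol of order `m`: for all multiindices `β` (encoded as a
list of coordinate directions), integers `α ≥ 0` and compact `K ⊂ ℝ^N`,
`|∂_x^β ∂_ξ^α a(x,ξ)| ≤ C ⟨ξ⟩^{m-α}` on `K × ℝ`, with `⟨ξ⟩ = √(1+ξ²)`. -/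
def IsSymbolOfOrder {N : ℕ} (m : ℝ) (a : (Fin N → ℝ) → ℝ → ℂ) : Prop :=
  ∀ (L : List (Fin N)) (α : ℕ) (K : Set (Fin N → ℝ)), IsCompact K →
    ∃ C : ℝ, ∀ x ∈ K, ∀ ξ : ℝ,
      ‖dirDerivs L (fun x' => iteratedDeriv α (fun t => a x' t) ξ) x‖ ≤
        C * Real.sqrt (1 + ξ ^ 2) ^ (m - α)

/-! A smooth function is a symbol of order `m` as soon as it lies in a space of functions that are
`O(⟨ξ⟩^m)` and that is stable under `∂_x`, `∂_ξ` and `ξ ∂_ξ`: if both `∂_ξ F` and `ξ ∂_ξ F` are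
`O(⟨ξ⟩^s)`, then `∂_ξ F` is `O(⟨ξ⟩^(s-1))`. The span of all convolutions `F * G` of symbols of order
`m < -1` is such a space. The growth bound holds because `⟨ξ - η⟩` or `⟨η⟩` is at least `⟨ξ⟩ / 2`,
while the other weight is integrable; stability follows from
`∂_x (F * G) = ∂_x F * G + F * ∂_x G`, `∂_ξ (F * G) = ∂_ξ F * G` and
`ξ ∂_ξ (F * G) = (ξ ∂_ξ F) * G + F * (ξ ∂_ξ G) + F * G`. -/

open MeasureTheory Filter Topology Asymptotics
open scoped ContDiff

namespace SymbolCalculus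

section JapaneseBracket

variable {W : Type*}

/-- The Japanese bracket `⟨x⟩ = √(1 + ‖x‖²)`, the weight in symbol estimates. -/
def japaneseBracket [Norm W] (x : W) : ℝ := √(1 + ‖x‖ ^ 2)

section SeminormedAddCommGroup

variable [SeminormedAddCommGroup W]

lemma sq_japaneseBracket (x : W) : japaneseBracket x ^ 2 = 1 + ‖x‖ ^ 2 :=
  Real.sq_sqrt (by positivity)

lemma one_le_japaneseBracket (x : W) : 1 ≤ japaneseBracket x :=
  Real.one_le_sqrt.2 (le_add_of_nonneg_right (sq_nonneg _))

lemma japaneseBracket_pos (x : W) : 0 < japaneseBracket x :=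
  one_pos.trans_le (one_le_japaneseBracket x)

lemma japaneseBracket_rpow_pos (x : W) (s : ℝ) : 0 < japaneseBracket x ^ s :=
  Real.rpow_pos_of_pos (japaneseBracket_pos x) s

lemma norm_le_japaneseBracket (x : W) : ‖x‖ ≤ japaneseBracket x :=
  Real.le_sqrt_of_sq_le (le_add_of_nonneg_left zero_le_one)

lemma japaneseBracket_le_one_add_norm (x : W) : japaneseBracket x ≤ 1 + ‖x‖ :=
  Real.sqrt_le_iff.2 ⟨by positivity, by nlinarith [norm_nonneg x]⟩

lemma japaneseBracket_neg (x : W) : japaneseBracket (-x) = japaneseBracket x := by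
  rw [japaneseBracket, norm_neg, japaneseBracket]

lemma continuous_japaneseBracket_rpow (s : ℝ) :
    Continuous fun x : W => japaneseBracket x ^ s := by
  refine Continuous.rpow_const ?_ fun x => Or.inl (japaneseBracket_pos x).ne'
  unfold japaneseBracket
  fun_prop

lemma japaneseBracket_add_le (x y : W) :
    japaneseBracket (x + y) ≤ japaneseBracket x + japaneseBracket y := by
  have hx := japaneseBracket_pos x
  have hy := japaneseBracket_pos y
  have hxy : ‖x‖ * ‖y‖ ≤ japaneseBracket x * japaneseBracket y :=
    mul_le_mul (norm_le_japaneseBracket x) (norm_le_japaneseBracket y) (norm_nonneg y) hx.le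
  refine Real.sqrt_le_iff.2 ⟨by positivity, ?_⟩
  calc 1 + ‖x + y‖ ^ 2 ≤ 1 + (‖x‖ + ‖y‖) ^ 2 := by gcongr; exact norm_add_le x y
    _ ≤ (japaneseBracket x + japaneseBracket y) ^ 2 := by
      nlinarith [sq_japaneseBracket x, sq_japaneseBracket y]

lemma japaneseBracket_add_le_two_mul_max (x y : W) :
    japaneseBracket (x + y) ≤ 2 * max (japaneseBracket x) (japaneseBracket y) := by
  rw [two_mul]
  exact (japaneseBracket_add_le x y).trans (add_le_add (le_max_left _ _) (le_max_right _ _))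

lemma japaneseBracket_add_le_two_mul_mul (x y : W) :
    japaneseBracket (x + y) ≤ 2 * japaneseBracket x * japaneseBracket y := by
  nlinarith [japaneseBracket_add_le x y, one_le_japaneseBracket x, one_le_japaneseBracket y]

lemma japaneseBracket_rpow_sub_le {s : ℝ} (hs : s ≤ 0) (x y : W) :
    japaneseBracket (x - y) ^ s ≤
      2 ^ (-s) * japaneseBracket x ^ (-s) * japaneseBracket y ^ s := by
  have hx := japaneseBracket_pos x
  have hy := japaneseBracket_pos y
  have peetre : japaneseBracket y / (2 * japaneseBracket x) ≤ japaneseBracket (x - y) := by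
    rw [div_le_iff₀' (by positivity)]
    have h := japaneseBracket_add_le_two_mul_mul x (y - x)
    rwa [add_sub_cancel, ← neg_sub x y, japaneseBracket_neg] at h
  calc japaneseBracket (x - y) ^ s ≤ (japaneseBracket y / (2 * japaneseBracket x)) ^ s :=
        Real.rpow_le_rpow_of_nonpos (by positivity) peetre hs
    _ = 2 ^ (-s) * japaneseBracket x ^ (-s) * japaneseBracket y ^ s := by
        rw [Real.div_rpow hy.le (by positivity), ← Real.mul_rpow zero_le_two hx.le,
          Real.rpow_neg (by positivity), div_eq_inv_mul]

/-- The idea: the larger of the two brackets is at least `⟨x + y⟩ / 2`. -/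
lemma japaneseBracket_rpow_mul_rpow_le {s : ℝ} (hs : s ≤ 0) (x y : W) :
    japaneseBracket x ^ s * japaneseBracket y ^ s ≤
      2 ^ (-s) * japaneseBracket (x + y) ^ s * (japaneseBracket x ^ s + japaneseBracket y ^ s) := by
  have hx := japaneseBracket_rpow_pos x s
  have hy := japaneseBracket_rpow_pos y s
  have hmax : max (japaneseBracket x) (japaneseBracket y) ^ s ≤
      2 ^ (-s) * japaneseBracket (x + y) ^ s := by
    have hpos : 0 < max (japaneseBracket x) (japaneseBracket y) :=
      lt_max_of_lt_left (japaneseBracket_pos x)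
    rw [Real.rpow_neg zero_le_two, ← div_eq_inv_mul, le_div_iff₀' (by positivity),
      ← Real.mul_rpow zero_le_two hpos.le]
    exact Real.rpow_le_rpow_of_nonpos (japaneseBracket_pos _)
      (japaneseBracket_add_le_two_mul_max x y) hs
  rcases max_choice (japaneseBracket x) (japaneseBracket y) with h | h <;> rw [h] at hmax <;>
    nlinarith [mul_le_mul_of_nonneg_right hmax hx.le, mul_le_mul_of_nonneg_right hmax hy.le]

end SeminormedAddCommGroup

lemma integrable_japaneseBracket_rpow [NormedAddCommGroup W] [NormedSpace ℝ W]
    [FiniteDimensional ℝ W] [MeasurableSpace W] [BorelSpace W] {μ : Measure W}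
    [μ.IsAddHaarMeasure] {s : ℝ} (hs : s < -Module.finrank ℝ W) :
    Integrable (fun x : W => japaneseBracket x ^ s) μ := by
  refine (integrable_rpow_neg_one_add_norm_sq (μ := μ) (lt_neg_of_lt_neg hs)).congr
    (Eventually.of_forall fun x => ?_)
  simp only [japaneseBracket, Real.sqrt_eq_rpow, neg_neg]
  rw [← Real.rpow_mul (by positivity), one_div_mul_eq_div]

end JapaneseBracket

section Smooth

variable (X V : Type*) [NormedAddCommGroup X] [NormedSpace ℝ X] [NormedAddCommGroup V]
  [NormedSpace ℝ V]

/-- The space `C^∞(X, V)`, as a submodule of all functions, so that derivatives are endomorphisms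
and can be composed and commuted as elements of a ring. -/
def smooth : Submodule ℝ (X → V) where
  carrier := {F | ContDiff ℝ ∞ F}
  add_mem' {F G} (hF : ContDiff ℝ ∞ F) (hG : ContDiff ℝ ∞ G) :=
    show ContDiff ℝ ∞ (F + G) from hF.add hG
  zero_mem' := show ContDiff ℝ ∞ (0 : X → V) from contDiff_const
  smul_mem' c F (hF : ContDiff ℝ ∞ F) := show ContDiff ℝ ∞ (c • F) from hF.const_smul c

variable {X V}

lemma contDiff_smooth (F : smooth X V) : ContDiff ℝ ∞ (F : X → V) := F.2

lemma continuous_smooth (F : smooth X V) : Continuous (F : X → V) :=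
  (contDiff_smooth F).continuous

lemma differentiable_smooth (F : smooth X V) : Differentiable ℝ (F : X → V) :=
  (contDiff_smooth F).differentiable (by simp)

/-- The constant-coefficient vector field `v` acting on smooth functions, linearly in `v`. -/
def derivAlong : X →ₗ[ℝ] Module.End ℝ (smooth X V) :=
  LinearMap.mk₂ ℝ
    (fun v F => ⟨fun p => fderiv ℝ (F : X → V) p v,
      ((contDiff_smooth F).fderiv_right (m := ∞) (by simp)).clm_apply contDiff_const⟩)
    (fun v w F => by ext p; simp)
    (fun c v F => by ext p; simp)
    (fun v F G => by
      ext p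
      simp [fderiv_add (differentiable_smooth F p) (differentiable_smooth G p)])
    (fun c v F => by
      ext p
      simp [fderiv_const_smul (differentiable_smooth F p) c])

lemma commute_derivAlong (v w : X) : Commute (derivAlong (V := V) v) (derivAlong w) := by
  ext F p
  have second (v w : X) : fderiv ℝ (fun q => fderiv ℝ F q w) p v =
      fderiv ℝ (fderiv ℝ (F : X → V)) p v w := by
    rw [fderiv_clm_apply (((contDiff_smooth F).fderiv_right (m := ∞) (by simp)).differentiable
      (by simp) p) (differentiableAt_const w)]
    simp
  have symm : IsSymmSndFDerivAt ℝ (F : X → V) p :=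
    (contDiff_smooth F).contDiffAt.isSymmSndFDerivAt (by
      rw [minSmoothness_of_isRCLikeNormedField]
      exact WithTop.coe_le_coe.2 le_top)
  exact (second v w).trans ((symm v w).trans (second w v).symm)

end Smooth

section Growth

variable (E V : Type*) [NormedAddCommGroup E] [NormedAddCommGroup V] [NormedSpace ℝ V]

/-- Functions `F(x, ξ)` that are `O(⟨ξ⟩^s)` locally uniformly in `x`: for each compact `K`, with
one constant on all of `K × ℝ` (a big-O along the principal filter). -/
def growth (s : ℝ) : Submodule ℝ (E × ℝ → V) where
  carrier := {F | ∀ K : Set E, IsCompact K →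
    F =O[𝓟 (K ×ˢ Set.univ)] fun p => japaneseBracket p.2 ^ s}
  add_mem' hF hG K hK := (hF K hK).add (hG K hK)
  zero_mem' _ _ := isBigO_zero _ _
  smul_mem' c _ hF K hK := (hF K hK).const_smul_left c

variable {E V} {F : E × ℝ → V} {r s : ℝ}

lemma growth_mono (h : s ≤ r) : growth E V s ≤ growth E V r := fun _ hF K hK =>
  (hF K hK).trans <| .of_norm_le fun p => by
    rw [Real.norm_of_nonneg (japaneseBracket_rpow_pos p.2 s).le]
    exact Real.rpow_le_rpow_of_exponent_le (one_le_japaneseBracket p.2) h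

lemma smul_mem_growth (hF : F ∈ growth E V s) :
    (fun p => p.2 • F p) ∈ growth E V (s + 1) := fun K hK => by
  have fiber : (fun p : E × ℝ => p.2) =O[𝓟 (K ×ˢ Set.univ)] fun p => japaneseBracket p.2 :=
    .of_norm_le fun p => norm_le_japaneseBracket p.2
  refine (fiber.smul (hF K hK)).congr_right fun p => ?_
  rw [smul_eq_mul, Real.rpow_add_one (japaneseBracket_pos p.2).ne', mul_comm]

lemma mem_growth_sub_one (hF : F ∈ growth E V s)
    (hξF : (fun p => p.2 • F p) ∈ growth E V s) : F ∈ growth E V (s - 1) := fun K hK => by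
  have weighted : (fun p => japaneseBracket p.2 • F p) =O[𝓟 (K ×ˢ Set.univ)]
      fun p => japaneseBracket p.2 ^ s := by
    refine (isBigO_of_le _ fun p => ?_).trans ((hF K hK).norm_left.add (hξF K hK).norm_left)
    rw [norm_smul, norm_smul, Real.norm_of_nonneg (japaneseBracket_pos p.2).le,
      Real.norm_of_nonneg (by positivity)]
    nlinarith [mul_le_mul_of_nonneg_right (japaneseBracket_le_one_add_norm p.2) (norm_nonneg (F p))]
  refine ((isBigO_refl (fun p : E × ℝ => (japaneseBracket p.2)⁻¹) _).smul weighted).congr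
    (fun p => ?_) fun p => ?_
  · rw [smul_smul, inv_mul_cancel₀ (japaneseBracket_pos p.2).ne', one_smul]
  · rw [smul_eq_mul, Real.rpow_sub_one (japaneseBracket_pos p.2).ne', inv_mul_eq_div]

end Growth

lemma pow_mul_mul_of_mul_eq_add_one {R : Type*} [Semiring R] {d x : R}
    (h : d * x = x * d + 1) (n : ℕ) : d ^ n * (x * d) = x * d ^ (n + 1) + n • d ^ n := by
  induction n with
  | zero => simp
  | succ n ih =>
    calc d ^ (n + 1) * (x * d) = d * (d ^ n * (x * d)) := by rw [pow_succ', mul_assoc]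
      _ = d * x * d ^ (n + 1) + n • d ^ (n + 1) := by
        rw [ih, mul_add, mul_smul_comm, ← pow_succ', mul_assoc]
      _ = x * d ^ (n + 1 + 1) + (n + 1) • d ^ (n + 1) := by
        rw [h, add_mul, one_mul, mul_assoc, ← pow_succ', add_assoc, succ_nsmul']

section Symbols

variable {E V : Type*} [NormedAddCommGroup E] [NormedSpace ℝ E] [NormedAddCommGroup V]
  [NormedSpace ℝ V]

/-- The derivative `∂_v` in a direction `v` of the base `E` of `E × ℝ`. -/
def baseDeriv : E →ₗ[ℝ] Module.End ℝ (smooth (E × ℝ) V) := derivAlong ∘ₗ LinearMap.inl ℝ E ℝ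

/-- The derivative `∂_ξ` in the fibre variable. -/
def fiberDeriv : Module.End ℝ (smooth (E × ℝ) V) := derivAlong (0, 1)

lemma hasDerivAt_fiber (F : smooth (E × ℝ) V) (x : E) (t : ℝ) :
    HasDerivAt (fun τ => (F : E × ℝ → V) (x, τ)) ((fiberDeriv F : E × ℝ → V) (x, t)) t :=
  (differentiable_smooth F (x, t)).hasFDerivAt.comp_hasDerivAt t
    ((hasDerivAt_const t x).prodMk (hasDerivAt_id t))

/-- The mixed derivative `∂_x^β ∂_ξ^n`, with `β` encoded as a list of base directions. -/
def mixedDeriv (L : List E) (n : ℕ) : Module.End ℝ (smooth (E × ℝ) V) :=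
  (L.map baseDeriv).prod * fiberDeriv ^ n

/-- Multiplication by the fibre variable `ξ`. -/
def fiberMul : Module.End ℝ (smooth (E × ℝ) V) where
  toFun F := ⟨fun p => p.2 • (F : E × ℝ → V) p, contDiff_snd.smul (contDiff_smooth F)⟩
  map_add' F G := by
    ext p
    exact smul_add _ _ _
  map_smul' c F := by
    ext p
    exact smul_comm _ _ _

/-- The radial vector field `ξ ∂_ξ`, which preserves the order of a symbol. -/
def fiberEuler : Module.End ℝ (smooth (E × ℝ) V) := fiberMul * fiberDeriv

lemma mixedDeriv_cons (v : E) (L : List E) (n : ℕ) :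
    mixedDeriv (V := V) (v :: L) n = baseDeriv v * mixedDeriv L n := by
  simp only [mixedDeriv, List.map_cons, List.prod_cons, mul_assoc]

lemma commute_baseDeriv_mixedDeriv (v : E) (L : List E) (n : ℕ) :
    Commute (baseDeriv (V := V) v) (mixedDeriv L n) :=
  (Commute.list_prod_right _ _ <| List.forall_mem_map.2 fun _ _ => commute_derivAlong _ _).mul_right
    ((commute_derivAlong _ _).pow_right n)

lemma mixedDeriv_baseDeriv (L : List E) (n : ℕ) (v : E) (F : smooth (E × ℝ) V) :
    mixedDeriv L n (baseDeriv v F) = mixedDeriv (v :: L) n F := by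
  rw [mixedDeriv_cons, (commute_baseDeriv_mixedDeriv v L n).eq, Module.End.mul_apply]

lemma derivAlong_mul_fiberMul (v : E × ℝ) :
    derivAlong (V := V) v * fiberMul = fiberMul * derivAlong v + v.2 • 1 := by
  ext F p
  have leibniz := (hasFDerivAt_snd (𝕜 := ℝ) (p := p)).smul (differentiable_smooth F p).hasFDerivAt
  exact congrArg (· v) leibniz.fderiv

lemma commute_fiberMul_prod_baseDeriv (L : List E) :
    Commute (fiberMul (V := V)) (L.map baseDeriv).prod :=
  Commute.list_prod_right _ _ <| List.forall_mem_map.2 fun v _ =>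
    ((derivAlong_mul_fiberMul ((v, 0) : E × ℝ)).trans (by rw [zero_smul, add_zero]; rfl)).symm

lemma fiberDeriv_mul_fiberMul :
    fiberDeriv (E := E) (V := V) * fiberMul = fiberMul * fiberDeriv + 1 :=
  (derivAlong_mul_fiberMul ((0, 1) : E × ℝ)).trans (by rw [one_smul]; rfl)

lemma fiberDeriv_pow_mul_fiberEuler (n : ℕ) :
    fiberDeriv (E := E) (V := V) ^ n * fiberEuler =
      fiberMul * fiberDeriv ^ (n + 1) + n • fiberDeriv ^ n :=
  pow_mul_mul_of_mul_eq_add_one fiberDeriv_mul_fiberMul n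

lemma mixedDeriv_mul_fiberEuler (L : List E) (n : ℕ) :
    mixedDeriv (V := V) L n * fiberEuler =
      fiberMul * mixedDeriv L (n + 1) + n • mixedDeriv L n := by
  rw [mixedDeriv, mul_assoc, fiberDeriv_pow_mul_fiberEuler, mul_add, mul_smul_comm, ← mul_assoc,
    ← (commute_fiberMul_prod_baseDeriv L).eq, mul_assoc]
  rfl

variable (E V) in
/-- Smooth symbols of order `m` on `E × ℝ`, in coordinate-free form: the base derivatives run over
lists of arbitrary vectors of `E`. -/
def symbols (m : ℝ) : Submodule ℝ (smooth (E × ℝ) V) where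
  carrier := {F | ∀ (L : List E) (n : ℕ),
    (mixedDeriv L n F : E × ℝ → V) ∈ growth E V (m - n)}
  add_mem' hF hG L n := by
    rw [map_add]
    exact add_mem (hF L n) (hG L n)
  zero_mem' L n := by
    rw [map_zero]
    exact zero_mem _
  smul_mem' c F hF L n := by
    rw [map_smul]
    exact Submodule.smul_mem _ c (hF L n)

variable {m : ℝ} {F : smooth (E × ℝ) V}

lemma mem_symbols : F ∈ symbols E V m ↔ ∀ (L : List E) (n : ℕ),
    (mixedDeriv L n F : E × ℝ → V) ∈ growth E V (m - n) := Iff.rfl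

lemma symbols_mono {r s : ℝ} (h : s ≤ r) : symbols E V s ≤ symbols E V r := fun _ hF L n =>
  growth_mono (by gcongr) (hF L n)

lemma mem_growth_of_mem_symbols (hF : F ∈ symbols E V m) : (F : E × ℝ → V) ∈ growth E V m := by
  simpa [mixedDeriv] using mem_symbols.1 hF [] 0

lemma baseDeriv_mem_symbols (hF : F ∈ symbols E V m) (v : E) :
    baseDeriv v F ∈ symbols E V m := fun L n => by
  rw [mixedDeriv_baseDeriv]
  exact mem_symbols.1 hF (v :: L) n

lemma fiberDeriv_mem_symbols_sub_one (hF : F ∈ symbols E V m) :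
    fiberDeriv F ∈ symbols E V (m - 1) := fun L n => by
  have := mem_symbols.1 hF L (n + 1)
  rwa [Nat.cast_succ, add_comm (n : ℝ) 1, ← sub_sub, mixedDeriv, pow_succ, ← mul_assoc] at this

lemma fiberDeriv_mem_symbols (hF : F ∈ symbols E V m) : fiberDeriv F ∈ symbols E V m :=
  symbols_mono (sub_le_self m zero_le_one) (fiberDeriv_mem_symbols_sub_one hF)

lemma fiberEuler_mem_symbols (hF : F ∈ symbols E V m) :
    fiberEuler F ∈ symbols E V m := fun L n => by
  have leading : (fiberMul (mixedDeriv L (n + 1) F) : E × ℝ → V) ∈ growth E V (m - n) := by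
    have := smul_mem_growth (mem_symbols.1 hF L (n + 1))
    rwa [Nat.cast_succ, ← sub_sub, sub_add_cancel] at this
  rw [← Module.End.mul_apply, mixedDeriv_mul_fiberEuler]
  exact add_mem leading (nsmul_mem (mem_symbols.1 hF L n) n)

lemma derivAlong_mem_symbols (hF : F ∈ symbols E V m) (v : E × ℝ) :
    derivAlong v F ∈ symbols E V m := by
  have split : v = (v.1, 0) + v.2 • (0, 1) := by ext <;> simp
  rw [split, map_add, map_smul]
  exact add_mem (baseDeriv_mem_symbols hF v.1)
    (Submodule.smul_mem _ v.2 (fiberDeriv_mem_symbols hF))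

lemma iteratedDeriv_fiber (F : smooth (E × ℝ) V) (n : ℕ) (x : E) :
    iteratedDeriv n (fun t => (F : E × ℝ → V) (x, t)) =
      fun t => ((fiberDeriv ^ n) F : E × ℝ → V) (x, t) := by
  induction n generalizing F with
  | zero => rfl
  | succ n ih =>
    rw [iteratedDeriv_succ', funext fun t => (hasDerivAt_fiber F x t).deriv, ih, pow_succ]
    rfl

lemma mem_symbols_of_basis {ι : Type*} [Finite ι] (b : Module.Basis ι ℝ E)
    (h : ∀ (L : List ι) (n : ℕ),
      (mixedDeriv (L.map b) n F : E × ℝ → V) ∈ growth E V (m - n)) :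
    F ∈ symbols E V m := fun L => by
  cases nonempty_fintype ι
  induction L generalizing F with
  | nil => exact h []
  | cons v L ih =>
    intro n
    rw [← mixedDeriv_baseDeriv]
    refine ih (fun L' k => ?_) n
    have expand : mixedDeriv (L'.map b) k (baseDeriv v F) =
        ∑ i, b.repr v i • mixedDeriv ((i :: L').map b) k F := by
      conv_lhs => rw [← b.sum_repr v]
      simp only [map_sum, map_smul, LinearMap.sum_apply, LinearMap.smul_apply,
        mixedDeriv_baseDeriv, List.map_cons]
    rw [expand, ← Submodule.coe_subtype, map_sum]
    exact sum_mem fun i _ => Submodule.smul_mem _ _ (h (i :: L') k)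

lemma fiberDeriv_pow_mem_growth {S : Submodule ℝ (smooth (E × ℝ) V)}
    (hgrowth : ∀ F ∈ S, (F : E × ℝ → V) ∈ growth E V m)
    (hfiber : S ∈ fiberDeriv.invtSubmodule) (heuler : S ∈ fiberEuler.invtSubmodule)
    (hF : F ∈ S) (n : ℕ) : ((fiberDeriv ^ n) F : E × ℝ → V) ∈ growth E V (m - n) := by
  induction n generalizing F with
  | zero => simpa using hgrowth F hF
  | succ n ih =>
    have leading : fiberMul ((fiberDeriv ^ (n + 1)) F) =
        (fiberDeriv ^ n) (fiberEuler F) - n • (fiberDeriv ^ n) F :=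
      eq_sub_of_add_eq (LinearMap.congr_fun (fiberDeriv_pow_mul_fiberEuler n) F).symm
    have bounded : ((fiberDeriv ^ (n + 1)) F : E × ℝ → V) ∈ growth E V (m - n) := by
      rw [pow_succ]
      exact ih (hfiber hF)
    have weighted : (fiberMul ((fiberDeriv ^ (n + 1)) F) : E × ℝ → V) ∈ growth E V (m - n) := by
      rw [leading]
      exact sub_mem (ih (heuler hF)) (nsmul_mem (ih hF) n)
    rw [Nat.cast_succ, ← sub_sub]
    exact mem_growth_sub_one bounded weighted

lemma le_symbols_of_invtSubmodule {S : Submodule ℝ (smooth (E × ℝ) V)}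
    (hgrowth : ∀ F ∈ S, (F : E × ℝ → V) ∈ growth E V m)
    (hbase : ∀ v, S ∈ (baseDeriv v).invtSubmodule)
    (hfiber : S ∈ fiberDeriv.invtSubmodule) (heuler : S ∈ fiberEuler.invtSubmodule) :
    S ≤ symbols E V m := fun F hF L n => by
  induction L generalizing F with
  | nil => simpa [mixedDeriv] using fiberDeriv_pow_mem_growth hgrowth hfiber heuler hF n
  | cons v L ih =>
    rw [← mixedDeriv_baseDeriv]
    exact ih _ (hbase v hF)

end Symbols

lemma isBigO_clm_of_apply {α X V : Type*} [NormedAddCommGroup X] [NormedSpace ℝ X]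
    [FiniteDimensional ℝ X] [NormedAddCommGroup V] [NormedSpace ℝ V] {l : Filter α}
    {T : α → X →L[ℝ] V} {g : α → ℝ} (h : ∀ v, (fun a => T a v) =O[l] g) : T =O[l] g := by
  let b := Module.finBasis ℝ X
  obtain ⟨C, -, hC⟩ := b.exists_opNorm_le (F := V)
  have basisBound : (fun a => ∑ i, ‖T a (b i)‖) =O[l] g :=
    .fun_sum fun i _ => (h (b i)).norm_left
  refine (IsBigO.of_bound C (Eventually.of_forall fun a => ?_)).trans basisBound
  have nonneg : 0 ≤ ∑ i, ‖T a (b i)‖ := Finset.sum_nonneg fun i _ => norm_nonneg _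
  rw [Real.norm_of_nonneg nonneg]
  exact hC nonneg fun i =>
    Finset.single_le_sum (f := fun i => ‖T a (b i)‖) (fun i _ => norm_nonneg _) (Finset.mem_univ i)

section FiberConvolution

variable {E A : Type*} [NormedRing A] {F G H : E × ℝ → A} {m r s : ℝ}

/-- The integrand `F(x, ξ - η) G(x, η)` of the fibrewise convolution, at the point `p = (x, ξ)`. -/
def fiberConvIntegrand (F G : E × ℝ → A) (p : E × ℝ) (η : ℝ) : A :=
  F (p.1, p.2 - η) * G (p.1, η)

lemma continuous_fiberConvIntegrand [TopologicalSpace E] (hF : Continuous F) (hG : Continuous G)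
    (p : E × ℝ) :
    Continuous (fiberConvIntegrand F G p) := by
  unfold fiberConvIntegrand
  fun_prop

variable [NormedAlgebra ℝ A]

/-- The convolution in the fibre variable, `(x, ξ) ↦ ∫ F(x, ξ - η) G(x, η) dη`. -/
def fiberConv (F G : E × ℝ → A) (p : E × ℝ) : A := ∫ η, fiberConvIntegrand F G p η

lemma fiberConv_add_right {p : E × ℝ}
    (hG : Integrable (fiberConvIntegrand F G p)) (hH : Integrable (fiberConvIntegrand F H p)) :
    fiberConv F (G + H) p = fiberConv F G p + fiberConv F H p := by
  rw [fiberConv, fiberConv, fiberConv, ← integral_add hG hH]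
  simp only [fiberConvIntegrand, Pi.add_apply, mul_add]

variable [NormedAddCommGroup E]

lemma isBigO_fiberConvIntegrand (hF : F ∈ growth E A s) (hG : G ∈ growth E A r) {K : Set E}
    (hK : IsCompact K) :
    (fun z : (E × ℝ) × ℝ => fiberConvIntegrand F G z.1 z.2) =O[𝓟 {z | z.1.1 ∈ K}]
      fun z => japaneseBracket (z.1.2 - z.2) ^ s * japaneseBracket z.2 ^ r :=
  ((hF K hK).comp_tendsto (k := fun z : (E × ℝ) × ℝ => (z.1.1, z.1.2 - z.2))
    (tendsto_principal_principal.2 fun _ hz => ⟨hz, trivial⟩)).mul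
  ((hG K hK).comp_tendsto (k := fun z : (E × ℝ) × ℝ => (z.1.1, z.2))
    (tendsto_principal_principal.2 fun _ hz => ⟨hz, trivial⟩))

lemma isBigO_fiberConvIntegrand_of_isCompact (hs : s ≤ 0) (hF : F ∈ growth E A s)
    (hG : G ∈ growth E A r) {Q : Set (E × ℝ)} (hQ : IsCompact Q) :
    (fun z : (E × ℝ) × ℝ => fiberConvIntegrand F G z.1 z.2) =O[𝓟 (Q ×ˢ Set.univ)]
      fun z => japaneseBracket z.2 ^ (s + r) := by
  have peetre : (fun z : (E × ℝ) × ℝ => japaneseBracket (z.1.2 - z.2) ^ s * japaneseBracket z.2 ^ r)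
      =O[⊤] fun z => japaneseBracket z.1.2 ^ (-s) * japaneseBracket z.2 ^ (s + r) := by
    refine .of_bound (2 ^ (-s)) (Eventually.of_forall fun z => ?_)
    have hξ := japaneseBracket_rpow_pos z.1.2 (-s)
    have hη := japaneseBracket_rpow_pos z.2 r
    have hηs := japaneseBracket_rpow_pos z.2 s
    have hξη := japaneseBracket_rpow_pos (z.1.2 - z.2) s
    rw [Real.rpow_add (japaneseBracket_pos z.2), Real.norm_of_nonneg (by positivity),
      Real.norm_of_nonneg (by positivity), ← mul_assoc, ← mul_assoc]
    exact mul_le_mul_of_nonneg_right (japaneseBracket_rpow_sub_le hs z.1.2 z.2) hη.le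
  have bounded : (fun z : (E × ℝ) × ℝ => japaneseBracket z.1.2 ^ (-s)) =O[𝓟 (Q ×ˢ Set.univ)]
      fun _ => (1 : ℝ) :=
    (((continuous_japaneseBracket_rpow (-s)).comp continuous_snd).continuousOn.isBigO_principal hQ
      (by simp)).comp_tendsto (tendsto_principal_principal.2 fun _ hz => hz.1)
  have onImage : 𝓟 (Q ×ˢ Set.univ) ≤ 𝓟 {z : (E × ℝ) × ℝ | z.1.1 ∈ Prod.fst '' Q} :=
    principal_mono.2 fun z hz => Set.mem_image_of_mem _ hz.1
  simpa only [one_mul] using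
    (((isBigO_fiberConvIntegrand hF hG (hQ.image continuous_fst)).mono onImage).trans
      (peetre.mono le_top)).trans (bounded.mul (isBigO_refl _ _))

lemma integrable_fiberConvIntegrand (hs : s ≤ 0) (hsr : s + r < -1) (hFc : Continuous F)
    (hGc : Continuous G) (hF : F ∈ growth E A s) (hG : G ∈ growth E A r) (p : E × ℝ) :
    Integrable (fiberConvIntegrand F G p) := by
  refine IsBigO.integrable (continuous_fiberConvIntegrand hFc hGc p).aestronglyMeasurable ?_
    (integrable_japaneseBracket_rpow (by simpa using hsr))
  exact (isBigO_fiberConvIntegrand_of_isCompact hs hF hG isCompact_singleton).comp_tendsto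
    (k := fun η => (p, η)) (tendsto_principal.2 (Eventually.of_forall fun η => ⟨rfl, trivial⟩))

lemma fiberConv_mem_growth (hm : m < -1) (hF : F ∈ growth E A m) (hG : G ∈ growth E A m) :
    fiberConv F G ∈ growth E A m := fun K hK => by
  obtain ⟨C, hC0, hC⟩ := (isBigO_fiberConvIntegrand hF hG hK).exists_nonneg
  replace hC := isBigOWith_principal.1 hC
  have integrable : Integrable fun η : ℝ => japaneseBracket η ^ m :=
    integrable_japaneseBracket_rpow (by simpa using hm)
  refine isBigO_principal.2
    ⟨C * (2 ^ (-m) * (2 * ∫ η : ℝ, japaneseBracket η ^ m)), fun p hp => ?_⟩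
  rw [Real.norm_of_nonneg (japaneseBracket_rpow_pos p.2 m).le]
  have pointwise (η : ℝ) : ‖fiberConvIntegrand F G p η‖ ≤ C * (2 ^ (-m) * japaneseBracket p.2 ^ m *
      (japaneseBracket (p.2 - η) ^ m + japaneseBracket η ^ m)) := by
    have hξ := japaneseBracket_rpow_pos (p.2 - η) m
    have hη := japaneseBracket_rpow_pos η m
    have splitting := japaneseBracket_rpow_mul_rpow_le (by linarith : m ≤ 0) (p.2 - η) η
    rw [sub_add_cancel] at splitting
    refine (hC (p, η) hp.1).trans (mul_le_mul_of_nonneg_left ?_ hC0)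
    rwa [Real.norm_of_nonneg (by positivity)]
  calc ‖fiberConv F G p‖
      ≤ ∫ η, C * (2 ^ (-m) * japaneseBracket p.2 ^ m *
          (japaneseBracket (p.2 - η) ^ m + japaneseBracket η ^ m)) :=
        norm_integral_le_of_norm_le
          ((((integrable.comp_sub_left p.2).add integrable).const_mul _).const_mul _)
          (Eventually.of_forall pointwise)
    _ = C * (2 ^ (-m) * (2 * ∫ η : ℝ, japaneseBracket η ^ m)) * japaneseBracket p.2 ^ m := by
        rw [integral_const_mul, integral_const_mul,
          integral_add (integrable.comp_sub_left p.2) integrable,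
          integral_sub_left_eq_self (fun η : ℝ => japaneseBracket η ^ m)]
        ring

section Derivative

variable [NormedSpace ℝ E]

lemma fderiv_fiberConvIntegrand (F G : smooth (E × ℝ) A) (p v : E × ℝ) (η : ℝ) :
    fderiv ℝ (fun q => fiberConvIntegrand F G q η) p v =
      fiberConvIntegrand (derivAlong v F : E × ℝ → A) G p η +
        fiberConvIntegrand F (baseDeriv v.1 G : E × ℝ → A) p η := by
  have left := (differentiable_smooth F (p.1, p.2 - η)).hasFDerivAt.comp p
    ((hasFDerivAt_fst (𝕜 := ℝ) (p := p)).prodMk (hasFDerivAt_snd.sub_const η))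
  have right := (differentiable_smooth G (p.1, η)).hasFDerivAt.comp p
    ((hasFDerivAt_fst (𝕜 := ℝ) (p := p)).prodMk (hasFDerivAt_const η p))
  rw [add_comm]
  exact congrArg (· v) (left.mul' right).fderiv

variable {F G : smooth (E × ℝ) A}

lemma isBigO_fderiv_fiberConvIntegrand [FiniteDimensional ℝ E] (hs : s ≤ 0)
    (hF : F ∈ symbols E A s) (hG : G ∈ symbols E A r) {Q : Set (E × ℝ)} (hQ : IsCompact Q) :
    (fun z : (E × ℝ) × ℝ => fderiv ℝ (fun q => fiberConvIntegrand (F : E × ℝ → A) G q z.2) z.1)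
      =O[𝓟 (Q ×ˢ Set.univ)] fun z => japaneseBracket z.2 ^ (s + r) :=
  isBigO_clm_of_apply fun v => by
    simp only [fderiv_fiberConvIntegrand]
    exact (isBigO_fiberConvIntegrand_of_isCompact hs
        (mem_growth_of_mem_symbols (derivAlong_mem_symbols hF v))
        (mem_growth_of_mem_symbols hG) hQ).add
      (isBigO_fiberConvIntegrand_of_isCompact hs (mem_growth_of_mem_symbols hF)
        (mem_growth_of_mem_symbols (baseDeriv_mem_symbols hG v.1)) hQ)

lemma integrable_fiberConvIntegrand_symbols (hs : s ≤ 0) (hsr : s + r < -1)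
    (hF : F ∈ symbols E A s) (hG : G ∈ symbols E A r) (p : E × ℝ) :
    Integrable (fiberConvIntegrand (F : E × ℝ → A) G p) :=
  integrable_fiberConvIntegrand hs hsr (continuous_smooth F) (continuous_smooth G)
    (mem_growth_of_mem_symbols hF) (mem_growth_of_mem_symbols hG) p

lemma smul_fiberConv {p : E × ℝ}
    (hleft : Integrable (fiberConvIntegrand (fiberMul F : E × ℝ → A) G p))
    (hright : Integrable (fiberConvIntegrand (F : E × ℝ → A) (fiberMul G) p)) :
    p.2 • fiberConv (F : E × ℝ → A) G p =
      fiberConv (fiberMul F : E × ℝ → A) G p + fiberConv (F : E × ℝ → A) (fiberMul G) p := by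
  have leibniz (η : ℝ) : p.2 • fiberConvIntegrand (F : E × ℝ → A) G p η =
      fiberConvIntegrand (fiberMul F : E × ℝ → A) G p η +
        fiberConvIntegrand (F : E × ℝ → A) (fiberMul G) p η := by
    simp only [fiberConvIntegrand, fiberMul, LinearMap.coe_mk, AddHom.coe_mk, smul_mul_assoc,
      mul_smul_comm, ← add_smul, sub_add_cancel]
  simp only [fiberConv, ← integral_smul, leibniz, integral_add hleft hright]

lemma fiberConv_fiberDeriv_left (hs : s ≤ 0) (hsr : s + r < -1)
    (hF : (F : E × ℝ → A) ∈ growth E A s) (hF' : (fiberDeriv F : E × ℝ → A) ∈ growth E A s)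
    (hG : (G : E × ℝ → A) ∈ growth E A r) (hG' : (fiberDeriv G : E × ℝ → A) ∈ growth E A r)
    (p : E × ℝ) :
    fiberConv (fiberDeriv F : E × ℝ → A) G p = fiberConv (F : E × ℝ → A) (fiberDeriv G) p := by
  have reflected (η : ℝ) : HasDerivAt (fun η => (F : E × ℝ → A) (p.1, p.2 - η))
      (-(fiberDeriv F : E × ℝ → A) (p.1, p.2 - η)) η :=
    (hasDerivAt_fiber F p.1 (p.2 - η)).comp_const_sub p.2 η
  have integrable {F' G' : smooth (E × ℝ) A} (hF' : (F' : E × ℝ → A) ∈ growth E A s)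
      (hG' : (G' : E × ℝ → A) ∈ growth E A r) :
      Integrable (fiberConvIntegrand (F' : E × ℝ → A) G' p) :=
    integrable_fiberConvIntegrand hs hsr (continuous_smooth F') (continuous_smooth G') hF' hG' p
  have byParts := integral_mul_deriv_eq_deriv_mul_of_integrable (fun η _ => reflected η)
    (fun η _ => hasDerivAt_fiber G p.1 η) (integrable hF hG')
    ((integrable hF' hG).neg.congr (.of_forall fun η => (neg_mul _ _).symm)) (integrable hF hG)
  simp only [neg_mul, integral_neg, neg_neg] at byParts
  exact byParts.symm

lemma fiberConv_fiberDeriv_fiberMul (hm : m < -1) (hF : F ∈ symbols E A m)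
    (hG : G ∈ symbols E A m) (p : E × ℝ) :
    fiberConv (fiberDeriv F : E × ℝ → A) (fiberMul G) p =
      fiberConv (F : E × ℝ → A) (fiberEuler G) p + fiberConv (F : E × ℝ → A) G p := by
  have hm₀ : m ≤ 0 := by linarith
  have hmm : m + m < -1 := by linarith
  have product : fiberDeriv (fiberMul G) = fiberEuler G + G :=
    LinearMap.congr_fun fiberDeriv_mul_fiberMul G
  have product_mem_growth : (fiberDeriv (fiberMul G) : E × ℝ → A) ∈ growth E A (m + 1) := by
    rw [product]
    exact growth_mono (le_add_of_nonneg_right zero_le_one)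
      (mem_growth_of_mem_symbols (add_mem (fiberEuler_mem_symbols hG) hG))
  rw [fiberConv_fiberDeriv_left hm₀ (by linarith) (mem_growth_of_mem_symbols hF)
    (mem_growth_of_mem_symbols (fiberDeriv_mem_symbols hF))
    (smul_mem_growth (mem_growth_of_mem_symbols hG)) product_mem_growth, product]
  exact fiberConv_add_right
    (integrable_fiberConvIntegrand_symbols hm₀ hmm hF (fiberEuler_mem_symbols hG) p)
    (integrable_fiberConvIntegrand_symbols hm₀ hmm hF hG p)

variable [FiniteDimensional ℝ E]

lemma integrable_fderiv_fiberConvIntegrand (hs : s ≤ 0) (hsr : s + r < -1)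
    (hF : F ∈ symbols E A s) (hG : G ∈ symbols E A r) (p : E × ℝ) :
    Integrable fun η => fderiv ℝ (fun q => fiberConvIntegrand (F : E × ℝ → A) G q η) p := by
  have joint : ContDiff ℝ ∞ fun z : ℝ × (E × ℝ) =>
      fiberConvIntegrand (F : E × ℝ → A) G z.2 z.1 := by
    have hF := contDiff_smooth F
    have hG := contDiff_smooth G
    unfold fiberConvIntegrand
    fun_prop
  have continuous : Continuous fun η => fderiv ℝ
      (fun q => fiberConvIntegrand (F : E × ℝ → A) G q η) p :=
    (ContDiff.fderiv (n := 0) (m := ∞) (f := fun η q => fiberConvIntegrand (F : E × ℝ → A) G q η)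
      joint contDiff_const (by simp)).continuous
  exact IsBigO.integrable continuous.aestronglyMeasurable
    ((isBigO_fderiv_fiberConvIntegrand hs hF hG isCompact_singleton).comp_tendsto
      (k := fun η => (p, η)) (tendsto_principal.2 (.of_forall fun η => ⟨rfl, trivial⟩)))
    (integrable_japaneseBracket_rpow (by simpa using hsr))

lemma hasFDerivAt_fiberConv (hs : s ≤ 0) (hsr : s + r < -1)
    (hF : F ∈ symbols E A s) (hG : G ∈ symbols E A r) (p : E × ℝ) :
    HasFDerivAt (fiberConv (F : E × ℝ → A) G)
      (∫ η, fderiv ℝ (fun q => fiberConvIntegrand (F : E × ℝ → A) G q η) p) p := by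
  obtain ⟨C, hC⟩ := isBigO_principal.1 (isBigO_fderiv_fiberConvIntegrand hs hF hG
    (isCompact_closedBall p 1))
  refine hasFDerivAt_integral_of_dominated_of_fderiv_le
    (bound := fun η => C * ‖japaneseBracket η ^ (s + r)‖)
    (Metric.closedBall_mem_nhds p one_pos)
    (.of_forall fun q => (continuous_fiberConvIntegrand (continuous_smooth F) (continuous_smooth G)
      q).aestronglyMeasurable)
    (integrable_fiberConvIntegrand_symbols hs hsr hF hG p)
    (integrable_fderiv_fiberConvIntegrand hs hsr hF hG p).aestronglyMeasurable
    (.of_forall fun η q hq => hC (q, η) ⟨hq, trivial⟩)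
    ((integrable_japaneseBracket_rpow (by simpa using hsr)).norm.const_mul C)
    (.of_forall fun η q _ => ((?_ : Differentiable ℝ _) q).hasFDerivAt)
  have hF := differentiable_smooth F
  have hG := differentiable_smooth G
  unfold fiberConvIntegrand
  fun_prop

lemma fderiv_fiberConv (hs : s ≤ 0) (hsr : s + r < -1)
    (hF : F ∈ symbols E A s) (hG : G ∈ symbols E A r) (p v : E × ℝ) :
    fderiv ℝ (fiberConv (F : E × ℝ → A) G) p v =
      fiberConv (derivAlong v F : E × ℝ → A) G p +
        fiberConv (F : E × ℝ → A) (baseDeriv v.1 G : E × ℝ → A) p := by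
  rw [(hasFDerivAt_fiberConv hs hsr hF hG p).fderiv, ContinuousLinearMap.integral_apply
    (integrable_fderiv_fiberConvIntegrand hs hsr hF hG p)]
  simp only [fderiv_fiberConvIntegrand]
  exact integral_add
    (integrable_fiberConvIntegrand_symbols hs hsr (derivAlong_mem_symbols hF v) hG p)
    (integrable_fiberConvIntegrand_symbols hs hsr hF (baseDeriv_mem_symbols hG v.1) p)

lemma differentiable_fiberConv (hs : s ≤ 0) (hsr : s + r < -1) (hF : F ∈ symbols E A s)
    (hG : G ∈ symbols E A r) : Differentiable ℝ (fiberConv (F : E × ℝ → A) G) := fun p =>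
  (hasFDerivAt_fiberConv hs hsr hF hG p).differentiableAt

lemma contDiff_fiberConv (hs : s ≤ 0) (hsr : s + r < -1) (hF : F ∈ symbols E A s)
    (hG : G ∈ symbols E A r) : ContDiff ℝ ∞ (fiberConv (F : E × ℝ → A) G) := by
  refine contDiff_infty.2 fun n => ?_
  induction n generalizing F G with
  | zero => exact contDiff_zero.2 (differentiable_fiberConv hs hsr hF hG).continuous
  | succ n ih =>
    rw [Nat.cast_succ]
    refine contDiff_succ_iff_fderiv_apply.2
      ⟨differentiable_fiberConv hs hsr hF hG, by simp, fun v => ?_⟩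
    rw [funext fun p => fderiv_fiberConv hs hsr hF hG p v]
    exact (ih (derivAlong_mem_symbols hF v) hG).add (ih hF (baseDeriv_mem_symbols hG v.1))

/-- The fibrewise convolution of two symbols of order `m < -1`, as a smooth function. -/
def smoothFiberConv (hm : m < -1) (hF : F ∈ symbols E A m) (hG : G ∈ symbols E A m) :
    smooth (E × ℝ) A :=
  ⟨fiberConv (F : E × ℝ → A) G, contDiff_fiberConv (by linarith) (by linarith) hF hG⟩

lemma baseDeriv_smoothFiberConv (hm : m < -1) (hF : F ∈ symbols E A m) (hG : G ∈ symbols E A m)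
    (v : E) :
    baseDeriv v (smoothFiberConv hm hF hG) =
      smoothFiberConv hm (baseDeriv_mem_symbols hF v) hG +
        smoothFiberConv hm hF (baseDeriv_mem_symbols hG v) := by
  ext p
  exact fderiv_fiberConv (by linarith) (by linarith) hF hG p (v, 0)

lemma fiberDeriv_smoothFiberConv (hm : m < -1) (hF : F ∈ symbols E A m)
    (hG : G ∈ symbols E A m) :
    fiberDeriv (smoothFiberConv hm hF hG) =
      smoothFiberConv hm (fiberDeriv_mem_symbols hF) hG := by
  ext p
  refine (fderiv_fiberConv (by linarith) (by linarith) hF hG p (0, 1)).trans ?_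
  simp [smoothFiberConv, fiberConv, fiberConvIntegrand, fiberDeriv]

/-- Of the two terms of `ξ = (ξ - η) + η`, the second makes the factor `ηG` one order too large;
integrating by parts moves `∂_ξ` onto that factor and brings its order back to `m`. -/
lemma fiberEuler_smoothFiberConv (hm : m < -1) (hF : F ∈ symbols E A m)
    (hG : G ∈ symbols E A m) :
    fiberEuler (smoothFiberConv hm hF hG) =
      smoothFiberConv hm (fiberEuler_mem_symbols hF) hG +
        (smoothFiberConv hm hF (fiberEuler_mem_symbols hG) + smoothFiberConv hm hF hG) := by
  ext p
  calc p.2 • (fiberDeriv (smoothFiberConv hm hF hG) : E × ℝ → A) p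
      = p.2 • fiberConv (fiberDeriv F : E × ℝ → A) G p := by
        rw [fiberDeriv_smoothFiberConv]
        rfl
    _ = fiberConv (fiberEuler F : E × ℝ → A) G p +
          fiberConv (fiberDeriv F : E × ℝ → A) (fiberMul G) p :=
        smul_fiberConv
          (integrable_fiberConvIntegrand_symbols (by linarith) (by linarith)
            (fiberEuler_mem_symbols hF) hG p)
          (integrable_fiberConvIntegrand (by linarith) (by linarith) (continuous_smooth _)
            (continuous_smooth (fiberMul G))
            (mem_growth_of_mem_symbols (fiberDeriv_mem_symbols hF))
            (smul_mem_growth (mem_growth_of_mem_symbols hG)) p)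
    _ = fiberConv (fiberEuler F : E × ℝ → A) G p +
          (fiberConv (F : E × ℝ → A) (fiberEuler G) p + fiberConv (F : E × ℝ → A) G p) := by
        rw [fiberConv_fiberDeriv_fiberMul hm hF hG]

end Derivative

end FiberConvolution

section Coordinates

variable {N : ℕ} {m : ℝ}

lemma dirDeriv_eq_baseDeriv (i : Fin N) (F : smooth ((Fin N → ℝ) × ℝ) ℂ) (ξ : ℝ) :
    dirDeriv i (fun x => (F : (Fin N → ℝ) × ℝ → ℂ) (x, ξ)) =
      fun x => (baseDeriv (Pi.basisFun ℝ (Fin N) i) F : (Fin N → ℝ) × ℝ → ℂ) (x, ξ) := by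
  ext x
  have chainRule := (differentiable_smooth F (x, ξ)).hasFDerivAt.comp x
    ((hasFDerivAt_id (𝕜 := ℝ) x).prodMk (hasFDerivAt_const ξ x))
  rw [Pi.basisFun_apply]
  exact congrArg (· (Pi.single i 1)) chainRule.fderiv

lemma dirDerivs_iteratedDeriv_eq_mixedDeriv (F : smooth ((Fin N → ℝ) × ℝ) ℂ) (L : List (Fin N))
    (n : ℕ) (ξ : ℝ) :
    dirDerivs L (fun x => iteratedDeriv n (fun t => (F : (Fin N → ℝ) × ℝ → ℂ) (x, t)) ξ) =
      fun x => (mixedDeriv (L.map (Pi.basisFun ℝ (Fin N))) n F : (Fin N → ℝ) × ℝ → ℂ) (x, ξ) := by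
  induction L with
  | nil =>
    simp only [dirDerivs, List.foldr_nil, iteratedDeriv_fiber, mixedDeriv, List.map_nil,
      List.prod_nil, one_mul]
  | cons i L ih =>
    rw [List.map_cons, mixedDeriv_cons]
    exact (congrArg (dirDeriv i) ih).trans (dirDeriv_eq_baseDeriv i _ ξ)

lemma isSymbolOfOrder_iff_mem_symbols {F : smooth ((Fin N → ℝ) × ℝ) ℂ} :
    IsSymbolOfOrder m (fun x ξ => (F : (Fin N → ℝ) × ℝ → ℂ) (x, ξ)) ↔
      F ∈ symbols (Fin N → ℝ) ℂ m := by
  have weight (ξ s : ℝ) : ‖japaneseBracket ξ ^ s‖ = √(1 + ξ ^ 2) ^ s := by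
    rw [Real.norm_of_nonneg (japaneseBracket_rpow_pos ξ s).le, japaneseBracket, Real.norm_eq_abs,
      sq_abs]
  have growth_iff (L : List (Fin N)) (n : ℕ) :
      (∀ K : Set (Fin N → ℝ), IsCompact K → ∃ C : ℝ, ∀ x ∈ K, ∀ ξ : ℝ,
        ‖dirDerivs L (fun x => iteratedDeriv n (fun t => (F : (Fin N → ℝ) × ℝ → ℂ) (x, t)) ξ) x‖ ≤
          C * √(1 + ξ ^ 2) ^ (m - n)) ↔
      (mixedDeriv (L.map (Pi.basisFun ℝ (Fin N))) n F : (Fin N → ℝ) × ℝ → ℂ) ∈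
        growth (Fin N → ℝ) ℂ (m - n) := by
    refine forall₂_congr fun K _ => ?_
    simp only [isBigO_principal, Prod.forall, Set.mem_prod, Set.mem_univ, and_true, weight,
      dirDerivs_iteratedDeriv_eq_mixedDeriv]
    exact exists_congr fun C => forall_congr' fun x => forall_comm
  exact (forall₂_congr growth_iff).trans
    ⟨mem_symbols_of_basis (Pi.basisFun ℝ (Fin N)), fun h L n => h (L.map _) n⟩

end Coordinates

end SymbolCalculus

open SymbolCalculus in
theorem convolution_isSymbolOfOrder_general {E A : Type*} [NormedAddCommGroup E]
    [NormedSpace ℝ E] [FiniteDimensional ℝ E] [NormedRing A] [NormedAlgebra ℝ A]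
    [CompleteSpace A] {m : ℝ} (hm : m < -1) {F G : smooth (E × ℝ) A}
    (hF : F ∈ symbols E A m) (hG : G ∈ symbols E A m) :
    smoothFiberConv hm hF hG ∈ symbols E A m := by
  let S := Submodule.span ℝ {H | ∃ (F G : smooth (E × ℝ) A) (hF : F ∈ symbols E A m)
    (hG : G ∈ symbols E A m), smoothFiberConv hm hF hG = H}
  have conv_mem {F G : smooth (E × ℝ) A} (hF : F ∈ symbols E A m) (hG : G ∈ symbols E A m) :
      smoothFiberConv hm hF hG ∈ S := Submodule.subset_span ⟨F, G, hF, hG, rfl⟩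
  have invariant {D : Module.End ℝ (smooth (E × ℝ) A)}
      (hD : ∀ {F G : smooth (E × ℝ) A} (hF : F ∈ symbols E A m) (hG : G ∈ symbols E A m),
        D (smoothFiberConv hm hF hG) ∈ S) : S ∈ D.invtSubmodule :=
    Submodule.span_le.2 (by rintro _ ⟨F, G, hF, hG, rfl⟩; exact hD hF hG)
  have growth_of_mem : ∀ H ∈ S, (H : E × ℝ → A) ∈ growth E A m := by
    refine fun H hH =>
      Submodule.span_le (p := (growth E A m).comap (Submodule.subtype _)) |>.2 ?_ hH
    rintro _ ⟨F, G, hF, hG, rfl⟩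
    exact fiberConv_mem_growth hm (mem_growth_of_mem_symbols hF) (mem_growth_of_mem_symbols hG)
  refine le_symbols_of_invtSubmodule growth_of_mem (fun v => invariant fun hF hG => ?_)
    (invariant fun hF hG => ?_) (invariant fun hF hG => ?_) (conv_mem hF hG)
  · rw [baseDeriv_smoothFiberConv]
    exact add_mem (conv_mem _ _) (conv_mem _ _)
  · rw [fiberDeriv_smoothFiberConv]
    exact conv_mem _ _
  · rw [fiberEuler_smoothFiberConv]
    exact add_mem (conv_mem _ _) (add_mem (conv_mem _ _) (conv_mem _ _))

/-- If `m < -1` and `a, b` are (smooth) symbols of order `m` on `ℝ^N × ℝ`, then the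
fiberwise convolution `c(x,ξ) = ∫ a(x,ξ-η) b(x,η) dη` is again a symbol of order `m`. -/
theorem convolution_isSymbolOfOrder {N : ℕ} (m : ℝ) (hm : m < -1)
    (a b : (Fin N → ℝ) → ℝ → ℂ)
    (ha : ContDiff ℝ (⊤ : ℕ∞) (fun p : (Fin N → ℝ) × ℝ => a p.1 p.2))
    (hb : ContDiff ℝ (⊤ : ℕ∞) (fun p : (Fin N → ℝ) × ℝ => b p.1 p.2))
    (hsa : IsSymbolOfOrder m a) (hsb : IsSymbolOfOrder m b) :
    IsSymbolOfOrder m (fun x ξ => ∫ η : ℝ, a x (ξ - η) * b x η) :=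
  SymbolCalculus.isSymbolOfOrder_iff_mem_symbols.2 <|
    convolution_isSymbolOfOrder_general (F := ⟨_, ha⟩) (G := ⟨_, hb⟩) hm
      (SymbolCalculus.isSymbolOfOrder_iff_mem_symbols.1 hsa)
      (SymbolCalculus.isSymbolOfOrder_iff_mem_symbols.1 hsb)
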